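/- arXiv:2112.15046 — 3 statements merged into one kernel-verified Lean document; each statement's English description precedes it below -/
import Mathlib

section
/- Let G and H be finitely generated groups, each equipped with the word metric of a finite generating set, let 𝒫 and 𝒬 be collections of subgroups of G and H respectively, and let q : (G,𝒫) → (H,𝒬) be a quasi-isometry of pairs. Let P ∈ 𝒫, Q ∈ 𝒬 and h ∈ H. If P is finitely generated and the Hausdorff distance in H between q(P) and the coset hQ is finite, then Q is finitely generated and P and Q (each with the word metric of a finite generating set) are quasi-isometric. -/
open Pointwise
open scoped ENNReal

/-- Hausdorff distance (valued in `ℝ≥0∞`) between two subsets, with respect to an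
arbitrary distance function `d`. -/
noncomputable def hdist {Y : Type*} (d : Y → Y → ℝ) (A B : Set Y) : ℝ≥0∞ :=
  max (⨆ a ∈ A, ⨅ b ∈ B, ENNReal.ofReal (d a b))
      (⨆ b ∈ B, ⨅ a ∈ A, ENNReal.ofReal (d a b))

/-- `q : X → Y` is an `(L,C)`-quasi-isometry with respect to the distance functions
`dX`, `dY`. -/
def IsQI {X Y : Type*} (dX : X → X → ℝ) (dY : Y → Y → ℝ) (L C : ℝ) (q : X → Y) : Prop :=
  1 ≤ L ∧ 0 ≤ C ∧
    (∀ x x' : X, L⁻¹ * dX x x' - C ≤ dY (q x) (q x') ∧ dY (q x) (q x') ≤ L * dX x x' + C) ∧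
    ∀ y : Y, ∃ x : X, dY y (q x) ≤ C

/-- `q : (X, 𝒜) → (Y, ℬ)` is an `(L,C,M)`-quasi-isometry of pairs. -/
def IsQIPair {X Y : Type*} (dX : X → X → ℝ) (dY : Y → Y → ℝ) (L C M : ℝ)
    (q : X → Y) (𝒜 : Set (Set X)) (ℬ : Set (Set Y)) : Prop :=
  IsQI dX dY L C q ∧
    (∀ A ∈ 𝒜, ∃ B ∈ ℬ, hdist dY (q '' A) B < ENNReal.ofReal M) ∧
    (∀ B ∈ ℬ, ∃ A ∈ 𝒜, hdist dY (q '' A) B < ENNReal.ofReal M)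

/-- A subset `B` is bounded with respect to the distance function `d`. -/
def BoundedWrt {X : Type*} (d : X → X → ℝ) (B : Set X) : Prop :=
  ∃ r : ℝ, ∀ x ∈ B, ∀ y ∈ B, d x y ≤ r

/-- A collection `𝒜` of subspaces of `X` is quasi-isometrically characteristic. -/
def IsQIChar {X : Type*} (d : X → X → ℝ) (𝒜 : Set (Set X)) : Prop :=
  (∀ L C : ℝ, 1 ≤ L → 0 ≤ C → ∃ M > (0 : ℝ),
      ∀ q : X → X, IsQI d d L C q → IsQIPair d d L C M q 𝒜 𝒜) ∧
    (∀ B : Set X, BoundedWrt d B →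
      ∃ F : Set (Set X), F.Finite ∧ F ⊆ 𝒜 ∧
        ∀ A ∈ 𝒜, (A ∩ B).Nonempty → ∃ A' ∈ F, hdist d A A' < ⊤) ∧
    (∀ A ∈ 𝒜, ∃ r : ℝ≥0∞, r < ⊤ ∧
      ∀ A₁ ∈ 𝒜, ∀ A₂ ∈ 𝒜, hdist d A A₁ < ⊤ → hdist d A A₂ < ⊤ → hdist d A₁ A₂ ≤ r)

/-- The word metric on a group `G` with respect to a generating set `S`:
`wordDist S g h` is the least `n` such that `g⁻¹ * h` is a product of `n` elements
of `S ∪ S⁻¹`. -/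
noncomputable def wordDist {G : Type*} [Group G] (S : Set G) (g h : G) : ℝ :=
  (sInf {n : ℕ | g⁻¹ * h ∈ (S ∪ S⁻¹) ^ n} : ℕ)

/-- The collection of all left cosets `gP` with `g ∈ G` and `P ∈ PP`. -/
def cosets {G : Type*} [Group G] (PP : Set (Subgroup G)) : Set (Set G) :=
  {A : Set G | ∃ g : G, ∃ P ∈ PP, A = g • (P : Set G)}

/-!
Finite balls make any two proper left-invariant distances on a group coarsely equivalent, so the
distances that `P` and `Q` inherit from `G` and `H` may be exchanged for their own word metrics.
For the inherited distances, nearest-point maps between `q(P)` and `hQ` give a coarse equivalence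
`P → Q`. Word metrics are geodesic on the scale of one generator, so a coarse map out of a finitely
generated group is Lipschitz; this turns the coarse equivalence into a quasi-isometry. Likewise
`P → Q` sends paths in the Cayley graph of `P` to sequences with bounded jumps, and since its image
is coarsely dense, the finitely many elements in a large enough ball generate `Q`.
-/

open scoped Function

/-- A pseudometric, as a predicate on a distance function. -/
structure IsPseudoDist {X : Type*} (d : X → X → ℝ) : Prop where
  self : ∀ x, d x x = 0
  comm : ∀ x y, d x y = d y x
  triangle : ∀ x y z, d x z ≤ d x y + d y z

/-- A left-invariant pseudometric on a group all of whose balls are finite. Word metrics of finite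
generating sets and their restrictions to subgroups are of this kind. -/
structure IsProperInvariantDist {G : Type*} [Group G] (d : G → G → ℝ) : Prop
    extends IsPseudoDist d where
  mul_left : ∀ a x y, d (a * x) (a * y) = d x y
  finite_ball : ∀ R, {x | d 1 x ≤ R}.Finite

/-- A map that is uniformly expansive at every scale, called bornologous in coarse geometry. -/
def IsBornologous {X Y : Type*} (dX : X → X → ℝ) (dY : Y → Y → ℝ) (f : X → Y) : Prop :=
  ∀ R, ∃ R', ∀ x x', dX x x' ≤ R → dY (f x) (f x') ≤ R'

/-- Two maps at bounded distance from each other. -/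
def IsClose {X Y : Type*} (d : Y → Y → ℝ) (f f' : X → Y) : Prop :=
  ∃ R, ∀ x, d (f x) (f' x) ≤ R

/-- A coarse (or uniform) embedding: distances before and after applying `f` control each other,
with no surjectivity required. Quasi-isometries and left translations are examples. -/
structure IsCoarseEmbedding {X Y : Type*} (dX : X → X → ℝ) (dY : Y → Y → ℝ) (f : X → Y) :
    Prop where
  bornologous : IsBornologous dX dY f
  reflects : ∀ R, ∃ R', ∀ x x', dY (f x) (f x') ≤ R → dX x x' ≤ R'

/-- The maps `f` and `g` are coarse equivalences that are coarsely inverse to each other. -/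
structure IsCoarseEquivalence {X Y : Type*} (dX : X → X → ℝ) (dY : Y → Y → ℝ) (f : X → Y)
    (g : Y → X) : Prop where
  bornologous : IsBornologous dX dY f
  bornologous_inv : IsBornologous dY dX g
  left_inv : IsClose dX (g ∘ f) id
  right_inv : IsClose dY (f ∘ g) id

section Coarse

variable {W X Y Z : Type*} {dX dX' : X → X → ℝ} {dY dY' : Y → Y → ℝ} {dZ : Z → Z → ℝ}

theorem IsPseudoDist.onFun (hd : IsPseudoDist dX) (j : W → X) : IsPseudoDist (dX on j) where
  self _ := hd.self _
  comm _ _ := hd.comm _ _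
  triangle _ _ _ := hd.triangle _ _ _

theorem IsClose.symm (hd : IsPseudoDist dY) {f f' : X → Y} (h : IsClose dY f f') :
    IsClose dY f' f := by
  obtain ⟨R, hR⟩ := h
  exact ⟨R, fun x => hd.comm (f x) (f' x) ▸ hR x⟩

theorem IsClose.trans (hd : IsPseudoDist dY) {f f' f'' : X → Y} (h : IsClose dY f f')
    (h' : IsClose dY f' f'') : IsClose dY f f'' := by
  obtain ⟨R, hR⟩ := h
  obtain ⟨R', hR'⟩ := h'
  exact ⟨R + R', fun x => (hd.triangle _ _ _).trans (add_le_add (hR x) (hR' x))⟩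

theorem IsClose.comp_right {f f' : X → Y} (h : IsClose dY f f') (j : W → X) :
    IsClose dY (f ∘ j) (f' ∘ j) := by
  obtain ⟨R, hR⟩ := h
  exact ⟨R, fun w => hR (j w)⟩

theorem IsBornologous.comp {g : Y → Z} {f : X → Y} (hg : IsBornologous dY dZ g)
    (hf : IsBornologous dX dY f) : IsBornologous dX dZ (g ∘ f) := by
  intro R
  obtain ⟨R', hR'⟩ := hf R
  obtain ⟨R'', hR''⟩ := hg R'
  exact ⟨R'', fun x x' hx => hR'' _ _ (hR' x x' hx)⟩

theorem IsBornologous.comp_isClose {k : Y → Z} (hk : IsBornologous dY dZ k) {f f' : X → Y}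
    (h : IsClose dY f f') : IsClose dZ (k ∘ f) (k ∘ f') := by
  obtain ⟨R, hR⟩ := h
  obtain ⟨R', hR'⟩ := hk R
  exact ⟨R', fun x => hR' _ _ (hR x)⟩

theorem IsBornologous.of_isClose (hd : IsPseudoDist dY) {f f' : X → Y}
    (hf : IsBornologous dX dY f) (h : IsClose dY f f') : IsBornologous dX dY f' := by
  intro R
  obtain ⟨D, hD⟩ := h
  obtain ⟨R', hR'⟩ := hf R
  refine ⟨D + (R' + D), fun x x' hx => ?_⟩
  calc dY (f' x) (f' x')
      ≤ dY (f' x) (f x) + (dY (f x) (f x') + dY (f x') (f' x')) :=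
        (hd.triangle _ _ _).trans (by gcongr; exact hd.triangle _ _ _)
    _ ≤ D + (R' + D) := by
        rw [hd.comm (f' x)]
        gcongr
        exacts [hD x, hR' x x' hx, hD x']

namespace IsCoarseEmbedding

theorem comp_right {f : X → Y} (hf : IsCoarseEmbedding dX dY f) (j : W → X) :
    IsCoarseEmbedding (dX on j) dY (f ∘ j) where
  bornologous R := (hf.bornologous R).imp fun _ hR' w w' => hR' (j w) (j w')
  reflects R := (hf.reflects R).imp fun _ hR' w w' => hR' (j w) (j w')

theorem isBornologous_of_comp {ψ : Y → Z} (hψ : IsCoarseEmbedding dY dZ ψ) {f : X → Y}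
    (hf : IsBornologous dX dZ (ψ ∘ f)) : IsBornologous dX dY f := by
  intro R
  obtain ⟨R', hR'⟩ := hf R
  obtain ⟨R'', hR''⟩ := hψ.reflects R'
  exact ⟨R'', fun x x' hx => hR'' _ _ (hR' x x' hx)⟩

theorem isClose_of_comp {ψ : Y → Z} (hψ : IsCoarseEmbedding dY dZ ψ) {f f' : X → Y}
    (h : IsClose dZ (ψ ∘ f) (ψ ∘ f')) : IsClose dY f f' := by
  obtain ⟨R, hR⟩ := h
  obtain ⟨R', hR'⟩ := hψ.reflects R
  exact ⟨R', fun x => hR' _ _ (hR x)⟩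

theorem isCoarseEquivalence (hZ : IsPseudoDist dZ) {φ : X → Z} {ψ : Y → Z}
    (hφ : IsCoarseEmbedding dX dZ φ) (hψ : IsCoarseEmbedding dY dZ ψ) {f : X → Y} {g : Y → X}
    (hf : IsClose dZ φ (ψ ∘ f)) (hg : IsClose dZ (φ ∘ g) ψ) : IsCoarseEquivalence dX dY f g where
  bornologous := hψ.isBornologous_of_comp (hφ.bornologous.of_isClose hZ hf)
  bornologous_inv := hφ.isBornologous_of_comp (hψ.bornologous.of_isClose hZ (hg.symm hZ))
  left_inv := hφ.isClose_of_comp ((hg.comp_right f).trans hZ (hf.symm hZ))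
  right_inv := hψ.isClose_of_comp (((hf.comp_right g).symm hZ).trans hZ hg)

end IsCoarseEmbedding

theorem IsCoarseEquivalence.change_dist {f : X → Y} {g : Y → X}
    (h : IsCoarseEquivalence dX dY f g)
    (hX : IsBornologous dX dX' id) (hX' : IsBornologous dX' dX id)
    (hY : IsBornologous dY dY' id) (hY' : IsBornologous dY' dY id) :
    IsCoarseEquivalence dX' dY' f g where
  bornologous := hY.comp (h.bornologous.comp hX')
  bornologous_inv := hX.comp (h.bornologous_inv.comp hY')
  left_inv := hX.comp_isClose h.left_inv
  right_inv := hY.comp_isClose h.right_inv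

theorem IsQI.isCoarseEmbedding {L C : ℝ} {f : X → Y} (hf : IsQI dX dY L C f) :
    IsCoarseEmbedding dX dY f := by
  obtain ⟨hL, -, hbounds, -⟩ := hf
  refine ⟨fun R => ⟨L * R + C, fun x x' hx => ?_⟩, fun R => ⟨L * (R + C), fun x x' hx => ?_⟩⟩
  · exact (hbounds x x').2.trans (by gcongr)
  · rw [← inv_mul_le_iff₀ (by positivity)]
    linarith [(hbounds x x').1]

theorem isQI_of_lipschitz_of_isClose (hX : IsPseudoDist dX) (hY : IsPseudoDist dY)
    {f : X → Y} {g : Y → X} {L : ℝ} (hL : 1 ≤ L)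
    (hf : ∀ x x', dY (f x) (f x') ≤ L * dX x x') (hg : ∀ y y', dX (g y) (g y') ≤ L * dY y y')
    (hgf : IsClose dX (g ∘ f) id) (hfg : IsClose dY (f ∘ g) id) :
    ∃ C, IsQI dX dY L C f := by
  obtain ⟨A, hA⟩ := hgf
  obtain ⟨B, hB⟩ := hfg
  have hC : 0 ≤ max 0 (max (2 * A) B) := le_max_left _ _
  have hAC : 2 * A ≤ max 0 (max (2 * A) B) := (le_max_left _ _).trans (le_max_right _ _)
  have hBC : B ≤ max 0 (max (2 * A) B) := (le_max_right _ _).trans (le_max_right _ _)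
  refine ⟨max 0 (max (2 * A) B), hL, hC, fun x x' => ⟨?_, (hf x x').trans (by linarith)⟩,
    fun y => ⟨g y, hY.comm y _ ▸ (hB y).trans hBC⟩⟩
  have hlower : dX x x' ≤ L * dY (f x) (f x') + 2 * A :=
    calc dX x x' ≤ dX x (g (f x)) + (dX (g (f x)) (g (f x')) + dX (g (f x')) x') :=
          (hX.triangle _ _ _).trans (by gcongr; exact hX.triangle _ _ _)
      _ ≤ A + (L * dY (f x) (f x') + A) := by
          rw [hX.comm x]
          gcongr
          exacts [hA x, hg _ _, hA x']
      _ = L * dY (f x) (f x') + 2 * A := by ring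
  rw [sub_le_iff_le_add, inv_mul_le_iff₀ (by positivity), mul_add]
  linarith [le_mul_of_one_le_left hC hL]

end Coarse

section Hausdorff

variable {X Y Z : Type*} {d : Z → Z → ℝ} {A B : Set Z}

theorem exists_lt_of_iSup_iInf_lt {ι κ α : Type*} [CompleteLinearOrder α] {s : Set ι} {t : Set κ}
    {e : ι → κ → α} {c : α} (h : (⨆ i ∈ s, ⨅ j ∈ t, e i j) < c) {i : ι} (hi : i ∈ s) :
    ∃ j ∈ t, e i j < c := by
  have hlt : (⨅ j ∈ t, e i j) < c :=
    (le_iSup₂ (f := fun i (_ : i ∈ s) => ⨅ j ∈ t, e i j) i hi).trans_lt h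
  simpa only [iInf_lt_iff, exists_prop] using hlt

theorem exists_dist_le_of_hdist_lt_top (h : hdist d A B < ⊤) :
    ∃ D, (∀ a ∈ A, ∃ b ∈ B, d a b ≤ D) ∧ ∀ b ∈ B, ∃ a ∈ A, d a b ≤ D := by
  obtain ⟨D, hlt, hDtop⟩ := exists_between h
  obtain ⟨hAB, hBA⟩ := max_lt_iff.1 hlt
  have le_toReal {r : ℝ} (hr : ENNReal.ofReal r < D) : r ≤ D.toReal :=
    (ENNReal.ofReal_le_iff_le_toReal hDtop.ne).1 hr.le
  refine ⟨D.toReal, fun a ha => ?_, fun b hb => ?_⟩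
  · obtain ⟨b, hb, hab⟩ := exists_lt_of_iSup_iInf_lt hAB ha
    exact ⟨b, hb, le_toReal hab⟩
  · obtain ⟨a, ha, hab⟩ := exists_lt_of_iSup_iInf_lt hBA hb
    exact ⟨a, ha, le_toReal hab⟩

theorem exists_isClose_of_hdist_range_lt_top {φ : X → Z} {ψ : Y → Z}
    (h : hdist d (Set.range φ) (Set.range ψ) < ⊤) :
    ∃ (f : X → Y) (g : Y → X), IsClose d φ (ψ ∘ f) ∧ IsClose d (φ ∘ g) ψ := by
  obtain ⟨D, hφ, hψ⟩ := exists_dist_le_of_hdist_lt_top h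
  simp only [Set.forall_mem_range, Set.exists_range_iff] at hφ hψ
  choose f hf using hφ
  choose g hg using hψ
  exact ⟨f, g, ⟨D, hf⟩, ⟨D, hg⟩⟩

end Hausdorff

namespace IsProperInvariantDist

variable {G H : Type*} [Group G] [Group H] {d d' : G → G → ℝ}

theorem dist_eq_dist_one (hd : IsProperInvariantDist d) (x y : G) : d x y = d 1 (x⁻¹ * y) := by
  rw [← hd.mul_left x⁻¹ x y, inv_mul_cancel]

theorem onFun (hd : IsProperInvariantDist d) (j : H →* G) (hj : Function.Injective j) :
    IsProperInvariantDist (d on j) where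
  toIsPseudoDist := hd.toIsPseudoDist.onFun j
  mul_left a x y := by simp only [Function.onFun, map_mul, hd.mul_left]
  finite_ball R := by
    simp only [Function.onFun, map_one]
    exact (hd.finite_ball R).preimage hj.injOn

theorem isBornologous_id (hd : IsProperInvariantDist d) (hd' : IsProperInvariantDist d') :
    IsBornologous d d' id := by
  intro R
  obtain ⟨R', hR'⟩ := ((hd.finite_ball R).image (d' 1)).bddAbove
  refine ⟨R', fun x y hxy => ?_⟩
  rw [hd.dist_eq_dist_one] at hxy
  exact (hd'.dist_eq_dist_one x y).trans_le (hR' ⟨x⁻¹ * y, hxy, rfl⟩)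

theorem isCoarseEmbedding_mul_left (hd : IsProperInvariantDist d) (a : G) :
    IsCoarseEmbedding d d (a * ·) where
  bornologous R := ⟨R, fun x y => (hd.mul_left a x y).le.trans⟩
  reflects R := ⟨R, fun x y => (hd.mul_left a x y).ge.trans⟩

end IsProperInvariantDist

section WordDist

variable {G : Type*} [Group G] {S : Set G}

theorem wordDist_le_of_mem_pow {g h : G} {n : ℕ} (hn : g⁻¹ * h ∈ (S ∪ S⁻¹) ^ n) :
    wordDist S g h ≤ n :=
  Nat.cast_le.2 (Nat.sInf_le hn)

theorem wordDist_nonneg (S : Set G) (g h : G) : 0 ≤ wordDist S g h :=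
  Nat.cast_nonneg _

theorem wordDist_mul_left (S : Set G) (a g h : G) :
    wordDist S (a * g) (a * h) = wordDist S g h := by
  simp only [wordDist, mul_inv_rev, mul_assoc, inv_mul_cancel_left]

theorem exists_mem_pow_of_closure_eq_top (hS : Subgroup.closure S = ⊤) (g : G) :
    ∃ n : ℕ, g ∈ (S ∪ S⁻¹) ^ n := by
  have hg : g ∈ Subgroup.closure S := hS ▸ Subgroup.mem_top g
  induction hg using Subgroup.closure_induction'' with
  | mem x hx => exact ⟨1, by simp [hx]⟩
  | inv_mem x hx => exact ⟨1, by simp [hx]⟩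
  | one => exact ⟨0, by simp⟩
  | mul x y _ _ ihx ihy =>
    obtain ⟨n, hn⟩ := ihx
    obtain ⟨m, hm⟩ := ihy
    exact ⟨n + m, pow_add (S ∪ S⁻¹) n m ▸ Set.mul_mem_mul hn hm⟩

theorem exists_mem_pow_wordDist_eq (hS : Subgroup.closure S = ⊤) (g h : G) :
    ∃ n : ℕ, g⁻¹ * h ∈ (S ∪ S⁻¹) ^ n ∧ wordDist S g h = n :=
  ⟨_, Nat.sInf_mem (exists_mem_pow_of_closure_eq_top hS (g⁻¹ * h)), rfl⟩

theorem wordDist_comm_le (hS : Subgroup.closure S = ⊤) (g h : G) :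
    wordDist S h g ≤ wordDist S g h := by
  obtain ⟨n, hn, dist_eq⟩ := exists_mem_pow_wordDist_eq hS g h
  have hsymm : (S ∪ S⁻¹)⁻¹ = S ∪ S⁻¹ := by rw [Set.union_inv, inv_inv, Set.union_comm]
  rw [dist_eq]
  refine wordDist_le_of_mem_pow ?_
  rw [← hsymm, inv_pow, Set.mem_inv]
  simpa using hn

theorem isPseudoDist_wordDist (hS : Subgroup.closure S = ⊤) : IsPseudoDist (wordDist S) where
  self g := le_antisymm
    (by simpa using wordDist_le_of_mem_pow (S := S) (g := g) (h := g) (n := 0) (by simp))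
    (wordDist_nonneg S g g)
  comm g h := le_antisymm (wordDist_comm_le hS h g) (wordDist_comm_le hS g h)
  triangle g h k := by
    obtain ⟨n, hn, hgh⟩ := exists_mem_pow_wordDist_eq hS g h
    obtain ⟨m, hm, hhk⟩ := exists_mem_pow_wordDist_eq hS h k
    rw [hgh, hhk, ← Nat.cast_add]
    refine wordDist_le_of_mem_pow ?_
    have hmul : g⁻¹ * k = g⁻¹ * h * (h⁻¹ * k) := by group
    rw [hmul, pow_add]
    exact Set.mul_mem_mul hn hm

theorem finite_pow_of_finite {M : Type*} [Monoid M] {s : Set M} (hs : s.Finite) (n : ℕ) :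
    (s ^ n).Finite := by
  induction n with
  | zero => simp
  | succ n ih => exact pow_succ s n ▸ ih.mul hs

theorem isProperInvariantDist_wordDist (hfin : S.Finite) (hS : Subgroup.closure S = ⊤) :
    IsProperInvariantDist (wordDist S) where
  toIsPseudoDist := isPseudoDist_wordDist hS
  mul_left := wordDist_mul_left S
  finite_ball R := by
    refine ((Set.finite_Iic ⌊R⌋₊).biUnion fun n _ =>
      finite_pow_of_finite (hfin.union hfin.inv) n).subset fun g hg => ?_
    obtain ⟨n, hn, dist_eq⟩ := exists_mem_pow_wordDist_eq hS 1 g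
    rw [Set.mem_ofPred_eq, dist_eq] at hg
    exact Set.mem_biUnion (Set.mem_Iic.2 (Nat.le_floor hg)) (by simpa using hn)

theorem wordDist_mul_right_le_one {s : G} (hs : s ∈ S ∪ S⁻¹) (g : G) :
    wordDist S g (g * s) ≤ 1 := by
  simpa using wordDist_le_of_mem_pow (S := S) (g := g) (h := g * s) (n := 1) (by simpa using hs)

variable {Y : Type*} {dY : Y → Y → ℝ}

theorem dist_le_mul_of_mem_pow (hY : IsPseudoDist dY) {f : G → Y} {K : ℝ}
    (hK : ∀ g, ∀ s ∈ S ∪ S⁻¹, dY (f g) (f (g * s)) ≤ K) (g : G) {n : ℕ} {w : G}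
    (hw : w ∈ (S ∪ S⁻¹) ^ n) : dY (f g) (f (g * w)) ≤ K * n := by
  induction n generalizing w with
  | zero =>
    obtain rfl : w = 1 := by simpa using hw
    simp [hY.self]
  | succ n ih =>
    rw [pow_succ] at hw
    obtain ⟨v, hv, s, hs, rfl⟩ := Set.mem_mul.1 hw
    calc dY (f g) (f (g * (v * s)))
        ≤ dY (f g) (f (g * v)) + dY (f (g * v)) (f (g * v * s)) :=
          mul_assoc g v s ▸ hY.triangle _ _ _
      _ ≤ K * n + K := add_le_add (ih hv) (hK _ s hs)
      _ = K * ↑(n + 1) := by push_cast; ring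

theorem IsBornologous.exists_lipschitz (hS : Subgroup.closure S = ⊤) (hY : IsPseudoDist dY)
    {f : G → Y} (hf : IsBornologous (wordDist S) dY f) :
    ∃ K, ∀ g h, dY (f g) (f h) ≤ K * wordDist S g h := by
  obtain ⟨K, hK⟩ := hf 1
  refine ⟨K, fun g h => ?_⟩
  obtain ⟨n, hn, dist_eq⟩ := exists_mem_pow_wordDist_eq hS g h
  rw [dist_eq]
  simpa using dist_le_mul_of_mem_pow hY
    (fun g s hs => hK _ _ (wordDist_mul_right_le_one hs g)) g hn

variable {H : Type*} [Group H]

theorem IsCoarseEquivalence.exists_isQI_wordDist {T : Set H} (hS : Subgroup.closure S = ⊤)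
    (hT : Subgroup.closure T = ⊤) {f : G → H} {g : H → G}
    (h : IsCoarseEquivalence (wordDist S) (wordDist T) f g) :
    ∃ L C, IsQI (wordDist S) (wordDist T) L C f := by
  have hdS := isPseudoDist_wordDist hS
  have hdT := isPseudoDist_wordDist hT
  obtain ⟨K, hK⟩ := h.bornologous.exists_lipschitz hS hdT
  obtain ⟨K', hK'⟩ := h.bornologous_inv.exists_lipschitz hT hdS
  refine ⟨max 1 (max K K'), isQI_of_lipschitz_of_isClose hdS hdT (le_max_left _ _)
    (fun x x' => (hK x x').trans ?_) (fun y y' => (hK' y y').trans ?_) h.left_inv h.right_inv⟩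
  · exact mul_le_mul_of_nonneg_right (by simp) (wordDist_nonneg S x x')
  · exact mul_le_mul_of_nonneg_right (by simp) (wordDist_nonneg T y y')

theorem inv_mul_mem_of_forall_generator (hS : Subgroup.closure S = ⊤) {f : G → H} {A : Subgroup H}
    (hA : ∀ g, ∀ s ∈ S ∪ S⁻¹, (f g)⁻¹ * f (g * s) ∈ A) (g : G) : (f 1)⁻¹ * f g ∈ A := by
  have step {x s : G} (hs : s ∈ S ∪ S⁻¹) (hx : (f 1)⁻¹ * f x ∈ A) :
      (f 1)⁻¹ * f (x * s) ∈ A := by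
    simpa [mul_assoc] using A.mul_mem hx (hA x s hs)
  have hg : g ∈ Subgroup.closure S := hS ▸ Subgroup.mem_top g
  induction hg using Subgroup.closure_induction_right with
  | one => simp
  | mul_right x _ s hs ih => exact step (Or.inl hs) ih
  | mul_inv_cancel x _ s hs ih => exact step (Or.inr (Set.inv_mem_inv.2 hs)) ih

theorem IsBornologous.fg_of_isClose_comp_id {d : H → H → ℝ} (hd : IsProperInvariantDist d)
    (hS : Subgroup.closure S = ⊤) {f : G → H} {g : H → G}
    (hf : IsBornologous (wordDist S) d f) (hfg : IsClose d (f ∘ g) id) : Group.FG H := by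
  obtain ⟨R, hR⟩ := hf 1
  obtain ⟨R', hR'⟩ := hfg
  set A := Subgroup.closure {x | d 1 x ≤ max R R'}
  have inv_mul_mem {x y : H} (hxy : d x y ≤ max R R') : x⁻¹ * y ∈ A :=
    Subgroup.subset_closure ((hd.dist_eq_dist_one x y).symm.trans_le hxy)
  have himage : ∀ x, (f 1)⁻¹ * f x ∈ A := inv_mul_mem_of_forall_generator hS fun x s hs =>
    inv_mul_mem ((hR _ _ (wordDist_mul_right_le_one hs x)).trans (le_max_left _ _))
  have hcoset (y : H) : (f 1)⁻¹ * y ∈ A := by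
    simpa [mul_assoc] using
      A.mul_mem (himage (g y)) (inv_mul_mem ((hR' y).trans (le_max_right _ _)))
  refine Group.fg_iff.2 ⟨_, (Subgroup.eq_top_iff' _).2 fun y => ?_, hd.finite_ball (max R R')⟩
  exact inv_mul_cancel_left (f 1) y ▸ hcoset (f 1 * y)

end WordDist

theorem statement0_general {G H : Type*} [Group G] [Group H] {dG : G → G → ℝ} {dH : H → H → ℝ}
    (hdG : IsProperInvariantDist dG) (hdH : IsProperInvariantDist dH)
    {q : G → H} {P : Subgroup G} (hq : IsCoarseEmbedding (dG on P.subtype) dH (q ∘ P.subtype))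
    {Q : Subgroup H} {h : H} (hPfg : P.FG)
    (hd : hdist dH (q '' (P : Set G)) (h • (Q : Set H)) < ⊤) :
    Q.FG ∧
      ∀ SP : Set P, SP.Finite → Subgroup.closure SP = ⊤ →
        ∀ SQ : Set Q, SQ.Finite → Subgroup.closure SQ = ⊤ →
          ∃ (f : P → Q) (L' C' : ℝ), IsQI (wordDist SP) (wordDist SQ) L' C' f := by
  have hdP := hdG.onFun P.subtype P.subtype_injective
  have hdQ := hdH.onFun Q.subtype Q.subtype_injective
  have hP : q '' (P : Set G) = Set.range (q ∘ P.subtype) := by simp [Set.range_comp]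
  have hQ : h • (Q : Set H) = Set.range ((h * ·) ∘ Q.subtype) := by
    simp [Set.range_comp, ← Set.image_smul]
  rw [hP, hQ] at hd
  obtain ⟨f, g, hf, hg⟩ := exists_isClose_of_hdist_range_lt_top hd
  have hfg := hq.isCoarseEquivalence hdH.toIsPseudoDist
    ((hdH.isCoarseEmbedding_mul_left h).comp_right Q.subtype) hf hg
  refine ⟨?_, fun SP hSPfin hSP SQ hSQfin hSQ => ⟨f, ?_⟩⟩
  · obtain ⟨SP, hSP, hSPfin⟩ := Group.fg_iff.1 ((Group.fg_iff_subgroup_fg P).2 hPfg)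
    have hid := (isProperInvariantDist_wordDist hSPfin hSP).isBornologous_id hdP
    exact (Group.fg_iff_subgroup_fg Q).1
      ((hfg.bornologous.comp hid).fg_of_isClose_comp_id hdQ hSP hfg.right_inv)
  · have hdSP := isProperInvariantDist_wordDist hSPfin hSP
    have hdSQ := isProperInvariantDist_wordDist hSQfin hSQ
    exact (hfg.change_dist (hdP.isBornologous_id hdSP) (hdSP.isBornologous_id hdP)
      (hdQ.isBornologous_id hdSQ) (hdSQ.isBornologous_id hdQ)).exists_isQI_wordDist hSP hSQ

/-- If `q : (G, PP) → (H, QQ)` is a quasi-isometry of pairs of finitely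
generated groups (with word metrics of finite generating sets), `P ∈ PP`, `Q ∈ QQ`,
`h ∈ H`, `P` is finitely generated and the Hausdorff distance between `q(P)` and the
coset `hQ` is finite, then `Q` is finitely generated and `P` and `Q` (each with the
word metric of a finite generating set) are quasi-isometric. -/
theorem statement0 {G H : Type*} [Group G] [Group H]
    (S : Set G) (hSfin : S.Finite) (hSgen : Subgroup.closure S = ⊤)
    (T : Set H) (hTfin : T.Finite) (hTgen : Subgroup.closure T = ⊤)
    (PP : Set (Subgroup G)) (QQ : Set (Subgroup H))
    (q : G → H) (L C M : ℝ)
    (hq : IsQIPair (wordDist S) (wordDist T) L C M q (cosets PP) (cosets QQ))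
    (P : Subgroup G) (hP : P ∈ PP) (Q : Subgroup H) (hQ : Q ∈ QQ) (h : H)
    (hPfg : P.FG)
    (hd : hdist (wordDist T) (q '' (P : Set G)) (h • (Q : Set H)) < ⊤) :
    Q.FG ∧
      ∀ SP : Set P, SP.Finite → Subgroup.closure SP = ⊤ →
        ∀ SQ : Set Q, SQ.Finite → Subgroup.closure SQ = ⊤ →
          ∃ (f : P → Q) (L' C' : ℝ), IsQI (wordDist SP) (wordDist SQ) L' C' f :=
  statement0_general (isProperInvariantDist_wordDist hSfin hSgen)
    (isProperInvariantDist_wordDist hTfin hTgen)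
    (hq.1.isCoarseEmbedding.comp_right P.subtype) hPfg hd
end

section
/- Being a qi-characteristic collection is invariant under quasi-isometry of pairs: if X and Y are metric spaces, 𝒜 and ℬ are collections of subspaces of X and Y respectively, and q : (X,𝒜) → (Y,ℬ) is a quasi-isometry of pairs, then 𝒜 is a qi-characteristic collection of subspaces of X if and only if ℬ is a qi-characteristic collection of subspaces of Y. -/
open Pointwise
open scoped ENNReal

/-!
A quasi-isometry changes Hausdorff distances by at most an affine amount, in both directions. Hence
quasi-isometries of pairs compose, have coarse inverses, and may be replaced by maps at bounded
distance. If `q : (X, 𝒜) → (Y, ℬ)` has coarse inverse `g`, then a self-quasi-isometry `p` of `Y` is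
at bounded distance from `q ∘ (g ∘ p ∘ q) ∘ g`, where `g ∘ p ∘ q` is a self-quasi-isometry of `X`
with constants depending only on those of `p`: this transfers condition (1). Conditions (2) and (3)
only mention bounded sets and finiteness of Hausdorff distances, both of which `q` preserves and
reflects.
-/

open Metric Bornology

section HausdorffEDist

theorem hdist_dist {X : Type*} [PseudoMetricSpace X] (A B : Set X) :
    hdist dist A B = hausdorffEDist A B := by
  simp only [hdist, hausdorffEDist_def, infEDist, edist_dist, dist_comm]

theorem boundedWrt_dist {X : Type*} [PseudoMetricSpace X] {s : Set X} :
    BoundedWrt dist s ↔ IsBounded s :=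
  isBounded_iff.symm

theorem infEDist_image_le_of_edist_le {ι X Y : Type*} [PseudoEMetricSpace X]
    [PseudoEMetricSpace Y] {f : ι → X} {g : ι → Y} {a b : ℝ≥0∞} (ha₀ : a ≠ 0) (ha : a ≠ ⊤)
    (h : ∀ i j, edist (g i) (g j) ≤ a * edist (f i) (f j) + b) (i : ι) (T : Set ι) :
    infEDist (g i) (g '' T) ≤ a * infEDist (f i) (f '' T) + b := by
  simp only [infEDist, iInf_image, ENNReal.mul_iInf_of_ne ha₀ ha, ENNReal.iInf_add]
  exact iInf₂_mono fun j _ => h i j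

-- Comparing two maps out of `ι` covers both directions: take `f = id` or `g = id`.
theorem hausdorffEDist_image_le_of_edist_le {ι X Y : Type*} [PseudoEMetricSpace X]
    [PseudoEMetricSpace Y] {f : ι → X} {g : ι → Y} {a b : ℝ≥0∞} (ha₀ : a ≠ 0) (ha : a ≠ ⊤)
    (h : ∀ i j, edist (g i) (g j) ≤ a * edist (f i) (f j) + b) (S T : Set ι) :
    hausdorffEDist (g '' S) (g '' T) ≤ a * hausdorffEDist (f '' S) (f '' T) + b := by
  have infEDist_le {U V : Set ι} {i : ι} (hi : i ∈ U) :
      infEDist (g i) (g '' V) ≤ a * hausdorffEDist (f '' U) (f '' V) + b := by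
    refine (infEDist_image_le_of_edist_le ha₀ ha h i V).trans ?_
    gcongr
    exact infEDist_le_hausdorffEDist_of_mem (Set.mem_image_of_mem f hi)
  refine hausdorffEDist_le_of_infEDist ?_ ?_
  · rintro _ ⟨i, hi, rfl⟩
    exact infEDist_le hi
  · rintro _ ⟨i, hi, rfl⟩
    rw [hausdorffEDist_comm]
    exact infEDist_le hi

theorem hausdorffEDist_image_le_of_dist_le {ι X : Type*} [PseudoMetricSpace X] {f g : ι → X}
    {r : ℝ} (h : ∀ i, dist (f i) (g i) ≤ r) (S : Set ι) :
    hausdorffEDist (f '' S) (g '' S) ≤ ENNReal.ofReal r := by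
  have edist_le (i : ι) : edist (f i) (g i) ≤ ENNReal.ofReal r := by
    rw [edist_dist]
    exact ENNReal.ofReal_le_ofReal (h i)
  refine hausdorffEDist_le_of_mem_edist ?_ ?_
  · rintro _ ⟨i, hi, rfl⟩
    exact ⟨g i, Set.mem_image_of_mem g hi, edist_le i⟩
  · rintro _ ⟨i, hi, rfl⟩
    exact ⟨f i, Set.mem_image_of_mem f hi, by simpa only [edist_comm] using edist_le i⟩

variable {X : Type*} [PseudoEMetricSpace X] {A B D : Set X}

theorem hausdorffEDist_lt_ofReal_add_of_le_of_lt {r s : ℝ} (hr : 0 ≤ r)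
    (hAB : hausdorffEDist A B ≤ ENNReal.ofReal r) (hBD : hausdorffEDist B D < ENNReal.ofReal s) :
    hausdorffEDist A D < ENNReal.ofReal (r + s) := by
  have hs : 0 < s := ENNReal.ofReal_pos.1 (pos_of_gt hBD)
  rw [ENNReal.ofReal_add hr hs.le]
  exact hausdorffEDist_triangle.trans_lt
    (ENNReal.add_lt_add_of_le_of_lt (ne_top_of_le_ne_top ENNReal.ofReal_ne_top hAB) hAB hBD)

theorem hausdorffEDist_lt_ofReal_add {r s : ℝ}
    (hAB : hausdorffEDist A B < ENNReal.ofReal r) (hBD : hausdorffEDist B D < ENNReal.ofReal s) :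
    hausdorffEDist A D < ENNReal.ofReal (r + s) :=
  hausdorffEDist_lt_ofReal_add_of_le_of_lt (ENNReal.ofReal_pos.1 (pos_of_gt hAB)).le hAB.le hBD

theorem hausdorffEDist_lt_top_trans (hAB : hausdorffEDist A B < ⊤)
    (hBD : hausdorffEDist B D < ⊤) : hausdorffEDist A D < ⊤ :=
  hausdorffEDist_triangle.trans_lt (ENNReal.add_lt_top.2 ⟨hAB, hBD⟩)

end HausdorffEDist

namespace IsQI

variable {X Y Z : Type*} [PseudoMetricSpace X] [PseudoMetricSpace Y] [PseudoMetricSpace Z]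
  {L C L' C' : ℝ} {q : X → Y}

theorem one_le (hq : IsQI dist dist L C q) : 1 ≤ L := hq.1

theorem pos (hq : IsQI dist dist L C q) : 0 < L := one_pos.trans_le hq.one_le

theorem nonneg (hq : IsQI dist dist L C q) : 0 ≤ C := hq.2.1

theorem dist_map_le (hq : IsQI dist dist L C q) (x x' : X) :
    dist (q x) (q x') ≤ L * dist x x' + C :=
  (hq.2.2.1 x x').2

theorem dist_le (hq : IsQI dist dist L C q) (x x' : X) :
    dist x x' ≤ L * (dist (q x) (q x') + C) := by
  rw [← inv_mul_le_iff₀ hq.pos, ← sub_le_iff_le_add]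
  exact (hq.2.2.1 x x').1

theorem exists_dist_le (hq : IsQI dist dist L C q) (y : Y) : ∃ x, dist y (q x) ≤ C :=
  hq.2.2.2 y

theorem of_dist_le (hL : 1 ≤ L) (hC : 0 ≤ C)
    (dist_le : ∀ x x', dist x x' ≤ L * (dist (q x) (q x') + C))
    (dist_map_le : ∀ x x', dist (q x) (q x') ≤ L * dist x x' + C)
    (exists_dist_le : ∀ y, ∃ x, dist y (q x) ≤ C) : IsQI dist dist L C q := by
  refine ⟨hL, hC, fun x x' => ⟨?_, dist_map_le x x'⟩, exists_dist_le⟩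
  rw [sub_le_iff_le_add, inv_mul_le_iff₀ (one_pos.trans_le hL)]
  exact dist_le x x'

theorem comp {p : Y → Z} (hp : IsQI dist dist L' C' p) (hq : IsQI dist dist L C q) :
    IsQI dist dist (L' * L) (L' * C + 2 * C') (p ∘ q) := by
  have hL := hq.pos
  have hL' := hp.pos
  have hC := hq.nonneg
  have hC' := hp.nonneg
  refine of_dist_le (one_le_mul_of_one_le_of_one_le hp.one_le hq.one_le) (by positivity)
    (fun x x' => ?_) (fun x x' => ?_) (fun z => ?_)
  · have hC_le : C ≤ L' * (L' * C) :=
      (le_mul_of_one_le_left hC hp.one_le).trans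
        (le_mul_of_one_le_left (by positivity) hp.one_le)
    have hC'_le : 0 ≤ L' * C' := by positivity
    calc dist x x' ≤ L * (dist (q x) (q x') + C) := hq.dist_le x x'
      _ ≤ L * (L' * (dist (p (q x)) (p (q x')) + C') + C) := by gcongr; exact hp.dist_le _ _
      _ ≤ L * (L' * (dist (p (q x)) (p (q x')) + (L' * C + 2 * C'))) := by gcongr; linarith
      _ = L' * L * (dist (p (q x)) (p (q x')) + (L' * C + 2 * C')) := by ring
  · calc dist (p (q x)) (p (q x')) ≤ L' * dist (q x) (q x') + C' := hp.dist_map_le _ _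
      _ ≤ L' * (L * dist x x' + C) + C' := by gcongr; exact hq.dist_map_le x x'
      _ ≤ L' * L * dist x x' + (L' * C + 2 * C') := by linarith
  · obtain ⟨y, hy⟩ := hp.exists_dist_le z
    obtain ⟨x, hx⟩ := hq.exists_dist_le y
    refine ⟨x, ?_⟩
    calc dist z (p (q x)) ≤ dist z (p y) + dist (p y) (p (q x)) := dist_triangle _ _ _
      _ ≤ C' + (L' * dist y (q x) + C') := by gcongr; exact hp.dist_map_le _ _
      _ ≤ C' + (L' * C + C') := by gcongr
      _ = L' * C + 2 * C' := by ring

theorem dist_leftInverse_le (hq : IsQI dist dist L C q) {g : Y → X}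
    (hg : ∀ y, dist y (q (g y)) ≤ C) (x : X) : dist x (g (q x)) ≤ 2 * L * C := by
  have hL := hq.pos
  calc dist x (g (q x)) ≤ L * (dist (q x) (q (g (q x))) + C) := hq.dist_le _ _
    _ ≤ L * (C + C) := by gcongr; exact hg _
    _ = 2 * L * C := by ring

theorem rightInverse (hq : IsQI dist dist L C q) {g : Y → X}
    (hg : ∀ y, dist y (q (g y)) ≤ C) : IsQI dist dist L (3 * L * C) g := by
  have hL := hq.pos
  have hC := hq.nonneg
  have hC_le : C ≤ L * C := le_mul_of_one_le_left hC hq.one_le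
  have hLC_le : L * C ≤ L * (L * C) := le_mul_of_one_le_left (by positivity) hq.one_le
  refine of_dist_le hq.one_le (by positivity) (fun y y' => ?_) (fun y y' => ?_)
    (fun x => ⟨q x, ?_⟩)
  · calc dist y y' ≤ dist y (q (g y)) + dist (q (g y)) (q (g y')) + dist (q (g y')) y' :=
          dist_triangle4 _ _ _ _
      _ ≤ C + (L * dist (g y) (g y') + C) + C := by
          rw [dist_comm _ y']
          gcongr
          exacts [hg y, hq.dist_map_le _ _, hg y']
      _ ≤ L * (dist (g y) (g y') + 3 * L * C) := by linarith
  · calc dist (g y) (g y') ≤ L * (dist (q (g y)) (q (g y')) + C) := hq.dist_le _ _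
      _ ≤ L * (dist (q (g y)) y + dist y y' + dist y' (q (g y')) + C) := by
          gcongr
          exact dist_triangle4 _ _ _ _
      _ ≤ L * (C + dist y y' + C + C) := by
          rw [dist_comm _ y]
          gcongr
          exacts [hg y, hg y']
      _ = L * dist y y' + 3 * L * C := by ring
  · linarith [hq.dist_leftInverse_le hg x, mul_nonneg hL.le hC]

theorem isBounded_preimage (hq : IsQI dist dist L C q) {s : Set Y} (hs : IsBounded s) :
    IsBounded (q ⁻¹' s) := by
  have hL := hq.pos
  obtain ⟨r, hr⟩ := isBounded_iff.1 hs
  refine isBounded_iff.2 ⟨L * (r + C), fun x hx x' hx' => (hq.dist_le x x').trans ?_⟩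
  gcongr
  exact hr hx hx'

theorem hausdorffEDist_image_le (hq : IsQI dist dist L C q) (A B : Set X) :
    hausdorffEDist (q '' A) (q '' B) ≤
      ENNReal.ofReal L * hausdorffEDist A B + ENNReal.ofReal C := by
  have edist_map_le (x x' : X) :
      edist (q x) (q x') ≤ ENNReal.ofReal L * edist x x' + ENNReal.ofReal C := by
    simp only [edist_dist]
    rw [← ENNReal.ofReal_mul hq.pos.le,
      ← ENNReal.ofReal_add (mul_nonneg hq.pos.le dist_nonneg) hq.nonneg]
    exact ENNReal.ofReal_le_ofReal (hq.dist_map_le x x')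
  simpa only [Set.image_id] using hausdorffEDist_image_le_of_edist_le (f := id)
    (ENNReal.ofReal_pos.2 hq.pos).ne' ENNReal.ofReal_ne_top edist_map_le A B

theorem hausdorffEDist_le_image (hq : IsQI dist dist L C q) (A B : Set X) :
    hausdorffEDist A B ≤
      ENNReal.ofReal L * hausdorffEDist (q '' A) (q '' B) + ENNReal.ofReal (L * C) := by
  have edist_le (x x' : X) :
      edist x x' ≤ ENNReal.ofReal L * edist (q x) (q x') + ENNReal.ofReal (L * C) := by
    simp only [edist_dist]
    rw [← ENNReal.ofReal_mul hq.pos.le, ← ENNReal.ofReal_add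
      (mul_nonneg hq.pos.le dist_nonneg) (mul_nonneg hq.pos.le hq.nonneg), ← mul_add]
    exact ENNReal.ofReal_le_ofReal (hq.dist_le x x')
  simpa only [Set.image_id] using hausdorffEDist_image_le_of_edist_le (g := id)
    (ENNReal.ofReal_pos.2 hq.pos).ne' ENNReal.ofReal_ne_top edist_le A B

theorem hausdorffEDist_image_lt_ofReal (hq : IsQI dist dist L C q) {A B : Set X} {r : ℝ}
    (h : hausdorffEDist A B < ENNReal.ofReal r) :
    hausdorffEDist (q '' A) (q '' B) < ENNReal.ofReal (L * r + C) := by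
  have hr : 0 < r := ENNReal.ofReal_pos.1 (pos_of_gt h)
  rw [ENNReal.ofReal_add (mul_nonneg hq.pos.le hr.le) hq.nonneg, ENNReal.ofReal_mul hq.pos.le]
  refine (hq.hausdorffEDist_image_le A B).trans_lt
    (ENNReal.add_lt_add_right ENNReal.ofReal_ne_top ?_)
  exact ENNReal.mul_lt_mul_right (ENNReal.ofReal_pos.2 hq.pos).ne' ENNReal.ofReal_ne_top h

theorem hausdorffEDist_image_lt_top_iff (hq : IsQI dist dist L C q) {A B : Set X} :
    hausdorffEDist (q '' A) (q '' B) < ⊤ ↔ hausdorffEDist A B < ⊤ := by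
  constructor <;> intro h
  · exact (hq.hausdorffEDist_le_image A B).trans_lt (by finiteness)
  · exact (hq.hausdorffEDist_image_le A B).trans_lt (by finiteness)

theorem hausdorffEDist_lt_top_iff_of_image (hq : IsQI dist dist L C q) {A A' : Set X}
    {B B' : Set Y} (h : hausdorffEDist (q '' A) B < ⊤) (h' : hausdorffEDist (q '' A') B' < ⊤) :
    hausdorffEDist B B' < ⊤ ↔ hausdorffEDist A A' < ⊤ := by
  rw [← hq.hausdorffEDist_image_lt_top_iff]
  constructor <;> intro hfin
  · rw [hausdorffEDist_comm] at h'
    exact hausdorffEDist_lt_top_trans (hausdorffEDist_lt_top_trans h hfin) h'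
  · rw [hausdorffEDist_comm] at h
    exact hausdorffEDist_lt_top_trans (hausdorffEDist_lt_top_trans h hfin) h'

end IsQI

theorem isQIPair_dist_iff {X Y : Type*} [PseudoMetricSpace X] [PseudoMetricSpace Y]
    {L C M : ℝ} {q : X → Y} {𝒜 : Set (Set X)} {ℬ : Set (Set Y)} :
    IsQIPair dist dist L C M q 𝒜 ℬ ↔ IsQI dist dist L C q ∧
      (∀ A ∈ 𝒜, ∃ B ∈ ℬ, hausdorffEDist (q '' A) B < ENNReal.ofReal M) ∧
      (∀ B ∈ ℬ, ∃ A ∈ 𝒜, hausdorffEDist (q '' A) B < ENNReal.ofReal M) := by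
  simp only [IsQIPair, hdist_dist]

namespace IsQIPair

variable {X Y Z : Type*} [PseudoMetricSpace X] [PseudoMetricSpace Y] [PseudoMetricSpace Z]
  {L C M L' C' M' : ℝ} {q : X → Y} {𝒜 : Set (Set X)} {ℬ : Set (Set Y)} {𝒟 : Set (Set Z)}

theorem isQI (hq : IsQIPair dist dist L C M q 𝒜 ℬ) : IsQI dist dist L C q := hq.1

theorem exists_mem_right (hq : IsQIPair dist dist L C M q 𝒜 ℬ) {A : Set X} (hA : A ∈ 𝒜) :
    ∃ B ∈ ℬ, hausdorffEDist (q '' A) B < ENNReal.ofReal M :=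
  (isQIPair_dist_iff.1 hq).2.1 A hA

theorem exists_mem_left (hq : IsQIPair dist dist L C M q 𝒜 ℬ) {B : Set Y} (hB : B ∈ ℬ) :
    ∃ A ∈ 𝒜, hausdorffEDist (q '' A) B < ENNReal.ofReal M :=
  (isQIPair_dist_iff.1 hq).2.2 B hB

theorem of_hausdorffEDist_image (hq : IsQIPair dist dist L C M q 𝒜 ℬ) {f : X → Y}
    (hf : IsQI dist dist L' C' f)
    (h : ∀ A B, hausdorffEDist (q '' A) B < ENNReal.ofReal M →
      hausdorffEDist (f '' A) B < ENNReal.ofReal M') :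
    IsQIPair dist dist L' C' M' f 𝒜 ℬ := by
  refine isQIPair_dist_iff.2 ⟨hf, fun A hA => ?_, fun B hB => ?_⟩
  · obtain ⟨B, hB, hAB⟩ := hq.exists_mem_right hA
    exact ⟨B, hB, h A B hAB⟩
  · obtain ⟨A, hA, hAB⟩ := hq.exists_mem_left hB
    exact ⟨A, hA, h A B hAB⟩

theorem mono (hq : IsQIPair dist dist L C M q 𝒜 ℬ) (hM : M ≤ M') :
    IsQIPair dist dist L C M' q 𝒜 ℬ :=
  hq.of_hausdorffEDist_image hq.isQI fun _ _ h => h.trans_le (ENNReal.ofReal_le_ofReal hM)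

theorem of_dist_le (hq : IsQIPair dist dist L C M q 𝒜 ℬ) {f : X → Y}
    (hf : IsQI dist dist L' C' f) {r : ℝ} (hr : 0 ≤ r) (h : ∀ x, dist (f x) (q x) ≤ r) :
    IsQIPair dist dist L' C' (r + M) f 𝒜 ℬ :=
  hq.of_hausdorffEDist_image hf fun A _ hAB =>
    hausdorffEDist_lt_ofReal_add_of_le_of_lt hr (hausdorffEDist_image_le_of_dist_le h A) hAB

theorem comp {p : Y → Z} (hp : IsQIPair dist dist L' C' M' p ℬ 𝒟)
    (hq : IsQIPair dist dist L C M q 𝒜 ℬ) :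
    IsQIPair dist dist (L' * L) (L' * C + 2 * C') (L' * M + C' + M') (p ∘ q) 𝒜 𝒟 := by
  have hausdorffEDist_lt {A : Set X} {B : Set Y} {D : Set Z}
      (hAB : hausdorffEDist (q '' A) B < ENNReal.ofReal M)
      (hBD : hausdorffEDist (p '' B) D < ENNReal.ofReal M') :
      hausdorffEDist (p ∘ q '' A) D < ENNReal.ofReal (L' * M + C' + M') := by
    rw [Set.image_comp]
    exact hausdorffEDist_lt_ofReal_add (hp.isQI.hausdorffEDist_image_lt_ofReal hAB) hBD
  refine isQIPair_dist_iff.2 ⟨hp.isQI.comp hq.isQI, fun A hA => ?_, fun D hD => ?_⟩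
  · obtain ⟨B, hB, hAB⟩ := hq.exists_mem_right hA
    obtain ⟨D, hD, hBD⟩ := hp.exists_mem_right hB
    exact ⟨D, hD, hausdorffEDist_lt hAB hBD⟩
  · obtain ⟨B, hB, hBD⟩ := hp.exists_mem_left hD
    obtain ⟨A, hA, hAB⟩ := hq.exists_mem_left hB
    exact ⟨A, hA, hausdorffEDist_lt hAB hBD⟩

theorem rightInverse (hq : IsQIPair dist dist L C M q 𝒜 ℬ) {g : Y → X}
    (hg : ∀ y, dist y (q (g y)) ≤ C) :
    IsQIPair dist dist L (3 * L * C) (2 * L * C + (L * M + 3 * L * C)) g ℬ 𝒜 := by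
  have hgqi := hq.isQI.rightInverse hg
  have hausdorffEDist_lt {A : Set X} {B : Set Y}
      (hAB : hausdorffEDist (q '' A) B < ENNReal.ofReal M) :
      hausdorffEDist (g '' B) A < ENNReal.ofReal (2 * L * C + (L * M + 3 * L * C)) := by
    have hA_gqA : hausdorffEDist A (g '' (q '' A)) ≤ ENNReal.ofReal (2 * L * C) := by
      simpa only [Set.image_image, Set.image_id'] using
        hausdorffEDist_image_le_of_dist_le (hq.isQI.dist_leftInverse_le hg) A
    rw [hausdorffEDist_comm]
    have hLC : 0 ≤ 2 * L * C := by linarith [mul_nonneg hq.isQI.pos.le hq.isQI.nonneg]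
    exact hausdorffEDist_lt_ofReal_add_of_le_of_lt hLC hA_gqA
      (hgqi.hausdorffEDist_image_lt_ofReal hAB)
  refine isQIPair_dist_iff.2 ⟨hgqi, fun B hB => ?_, fun A hA => ?_⟩
  · obtain ⟨A, hA, hAB⟩ := hq.exists_mem_left hB
    exact ⟨A, hA, hausdorffEDist_lt hAB⟩
  · obtain ⟨B, hB, hAB⟩ := hq.exists_mem_right hA
    exact ⟨B, hB, hausdorffEDist_lt hAB⟩

end IsQIPair

section Characteristic

variable {X Y : Type*} [PseudoMetricSpace X] [PseudoMetricSpace Y]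

/-- Condition (1) of a qi-characteristic collection: every self-quasi-isometry preserves the
collection, up to a Hausdorff error depending only on the quasi-isometry constants. -/
def IsUniformlyQIInvariant (𝒜 : Set (Set X)) : Prop :=
  ∀ L C : ℝ, 1 ≤ L → 0 ≤ C → ∃ M > (0 : ℝ),
    ∀ q : X → X, IsQI dist dist L C q → IsQIPair dist dist L C M q 𝒜 𝒜

/-- Condition (2) of a qi-characteristic collection: a bounded set meets only finitely many
members up to coarse equivalence. The finiteness is expressed by a finite set `F` of
representatives. -/
def IsCoarselyLocallyFinite (𝒜 : Set (Set X)) : Prop :=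
  ∀ s : Set X, IsBounded s → ∃ F : Set (Set X), F.Finite ∧ F ⊆ 𝒜 ∧
    ∀ A ∈ 𝒜, (A ∩ s).Nonempty → ∃ A' ∈ F, hausdorffEDist A A' < ⊤

/-- Condition (3) of a qi-characteristic collection: each coarse equivalence class of members has
finite diameter for the Hausdorff distance. -/
def HasBoundedCoarseClasses (𝒜 : Set (Set X)) : Prop :=
  ∀ A ∈ 𝒜, ∃ r : ℝ≥0∞, r < ⊤ ∧ ∀ A₁ ∈ 𝒜, ∀ A₂ ∈ 𝒜,
    hausdorffEDist A A₁ < ⊤ → hausdorffEDist A A₂ < ⊤ → hausdorffEDist A₁ A₂ ≤ r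

theorem isQIChar_dist_iff {𝒜 : Set (Set X)} :
    IsQIChar dist 𝒜 ↔
      IsUniformlyQIInvariant 𝒜 ∧ IsCoarselyLocallyFinite 𝒜 ∧ HasBoundedCoarseClasses 𝒜 := by
  simp only [IsQIChar, IsUniformlyQIInvariant, IsCoarselyLocallyFinite, HasBoundedCoarseClasses,
    hdist_dist, boundedWrt_dist]

variable {L C M : ℝ} {q : X → Y} {𝒜 : Set (Set X)} {ℬ : Set (Set Y)}

theorem IsUniformlyQIInvariant.of_isQIPair (h𝒜 : IsUniformlyQIInvariant 𝒜)
    (hq : IsQIPair dist dist L C M q 𝒜 ℬ) : IsUniformlyQIInvariant ℬ := by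
  intro L' C' hL' hC'
  have hL := hq.isQI.one_le
  have hC := hq.isQI.nonneg
  choose g hqg using hq.isQI.exists_dist_le
  have hg := hq.rightInverse hqg
  obtain ⟨N, -, hN⟩ := h𝒜 (L * (L' * L)) (L * (L' * C + 2 * C') + 2 * (3 * L * C))
    (one_le_mul_of_one_le_of_one_le hL (one_le_mul_of_one_le_of_one_le hL' hL)) (by positivity)
  have hgpq {p : Y → Y} (hp : IsQI dist dist L' C' p) :
      IsQIPair dist dist _ _ N (g ∘ p ∘ q) 𝒜 𝒜 :=
    hN _ (hg.isQI.comp (hp.comp hq.isQI))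
  have dist_le {p : Y → Y} (hp : IsQI dist dist L' C' p) (y : Y) :
      dist (p y) ((q ∘ (g ∘ p ∘ q) ∘ g) y) ≤ L' * C + C' + C :=
    calc dist (p y) (q (g (p (q (g y)))))
        ≤ dist (p y) (p (q (g y))) + dist (p (q (g y))) (q (g (p (q (g y))))) :=
          dist_triangle _ _ _
      _ ≤ L' * dist y (q (g y)) + C' + C := add_le_add (hp.dist_map_le _ _) (hqg _)
      _ ≤ L' * C + C' + C := by gcongr; exact hqg y
  obtain ⟨N', hN'⟩ : ∃ N', ∀ p : Y → Y, IsQI dist dist L' C' p →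
      IsQIPair dist dist L' C' N' p ℬ ℬ :=
    ⟨_, fun p hp => (hq.comp ((hgpq hp).comp hg)).of_dist_le hp (by positivity) (dist_le hp)⟩
  exact ⟨max N' 1, by positivity, fun p hp => (hN' p hp).mono (le_max_left N' 1)⟩

theorem IsCoarselyLocallyFinite.of_isQIPair (h𝒜 : IsCoarselyLocallyFinite 𝒜)
    (hq : IsQIPair dist dist L C M q 𝒜 ℬ) : IsCoarselyLocallyFinite ℬ := by
  intro s hs
  obtain ⟨F, hF, hF𝒜, hF_rep⟩ :=
    h𝒜 (q ⁻¹' thickening M s) (hq.isQI.isBounded_preimage hs.thickening)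
  choose! φ hφℬ hφ using fun A hA => hq.exists_mem_right (A := A) hA
  refine ⟨φ '' F, hF.image φ, Set.image_subset_iff.2 fun A hA => hφℬ A (hF𝒜 hA), ?_⟩
  rintro B hB ⟨y, hyB, hys⟩
  obtain ⟨A, hA, hAB⟩ := hq.exists_mem_left hB
  obtain ⟨x, hxA, hx⟩ : ∃ x ∈ A, q x ∈ thickening M s := by
    rw [hausdorffEDist_comm] at hAB
    obtain ⟨_, ⟨x, hxA, rfl⟩, hyx⟩ := exists_edist_lt_of_hausdorffEDist_lt hyB hAB
    rw [edist_comm] at hyx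
    exact ⟨x, hxA, (mem_thickening_iff_exists_edist_lt _ _).2 ⟨y, hys, hyx⟩⟩
  obtain ⟨A', hA'F, hAA'⟩ := hF_rep A hA ⟨x, hxA, hx⟩
  exact ⟨φ A', Set.mem_image_of_mem φ hA'F,
    (hq.isQI.hausdorffEDist_lt_top_iff_of_image hAB.lt_top (hφ A' (hF𝒜 hA'F)).lt_top).2 hAA'⟩

theorem HasBoundedCoarseClasses.of_isQIPair (h𝒜 : HasBoundedCoarseClasses 𝒜)
    (hq : IsQIPair dist dist L C M q 𝒜 ℬ) : HasBoundedCoarseClasses ℬ := by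
  intro B hB
  obtain ⟨A, hA, hAB⟩ := hq.exists_mem_left hB
  obtain ⟨r, hr, hdiam⟩ := h𝒜 A hA
  refine ⟨ENNReal.ofReal M + (ENNReal.ofReal L * r + ENNReal.ofReal C) + ENNReal.ofReal M,
    by finiteness, fun B₁ hB₁ B₂ hB₂ hBB₁ hBB₂ => ?_⟩
  obtain ⟨A₁, hA₁, hAB₁⟩ := hq.exists_mem_left hB₁
  obtain ⟨A₂, hA₂, hAB₂⟩ := hq.exists_mem_left hB₂
  have hA₁A₂ : hausdorffEDist A₁ A₂ ≤ r := hdiam A₁ hA₁ A₂ hA₂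
    ((hq.isQI.hausdorffEDist_lt_top_iff_of_image hAB.lt_top hAB₁.lt_top).1 hBB₁)
    ((hq.isQI.hausdorffEDist_lt_top_iff_of_image hAB.lt_top hAB₂.lt_top).1 hBB₂)
  calc hausdorffEDist B₁ B₂
      ≤ hausdorffEDist B₁ (q '' A₁) + hausdorffEDist (q '' A₁) (q '' A₂)
          + hausdorffEDist (q '' A₂) B₂ :=
        hausdorffEDist_triangle.trans (add_le_add_left hausdorffEDist_triangle _)
    _ ≤ ENNReal.ofReal M + (ENNReal.ofReal L * hausdorffEDist A₁ A₂ + ENNReal.ofReal C)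
          + ENNReal.ofReal M := by
        rw [hausdorffEDist_comm (s := B₁)]
        gcongr
        exact hq.isQI.hausdorffEDist_image_le A₁ A₂
    _ ≤ ENNReal.ofReal M + (ENNReal.ofReal L * r + ENNReal.ofReal C) + ENNReal.ofReal M := by
        gcongr

theorem IsQIChar.of_isQIPair (h𝒜 : IsQIChar dist 𝒜)
    (hq : IsQIPair dist dist L C M q 𝒜 ℬ) : IsQIChar dist ℬ := by
  obtain ⟨hinv, hfin, hbdd⟩ := isQIChar_dist_iff.1 h𝒜
  exact isQIChar_dist_iff.2 ⟨hinv.of_isQIPair hq, hfin.of_isQIPair hq, hbdd.of_isQIPair hq⟩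

end Characteristic

theorem statement3_general {X Y : Type*} [PseudoMetricSpace X] [PseudoMetricSpace Y]
    {𝒜 : Set (Set X)} {ℬ : Set (Set Y)} {q : X → Y} {L C M : ℝ}
    (hq : IsQIPair dist dist L C M q 𝒜 ℬ) : IsQIChar dist 𝒜 ↔ IsQIChar dist ℬ := by
  choose g hqg using hq.isQI.exists_dist_le
  exact ⟨fun h𝒜 => h𝒜.of_isQIPair hq, fun hℬ => hℬ.of_isQIPair (hq.rightInverse hqg)⟩

/-- Being a qi-characteristic collection is invariant under
quasi-isometry of pairs: if `q : (X, A) → (Y, B)` is a quasi-isometry of pairs of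
metric spaces, then `A` is qi-characteristic if and only if `B` is. -/
theorem statement3 {X Y : Type*} [MetricSpace X] [MetricSpace Y]
    (A : Set (Set X)) (B : Set (Set Y)) (q : X → Y) (L C M : ℝ)
    (hq : IsQIPair (fun x x' : X => dist x x') (fun y y' : Y => dist y y') L C M q A B) :
    IsQIChar (fun x x' : X => dist x x') A ↔
      IsQIChar (fun y y' : Y => dist y y') B :=
  statement3_general hq
end

section
/- Let n ≥ 2 and let G = BS(1,n) be the Baumslag–Solitar group with presentation ⟨a,t ∣ t a t⁻¹ = aⁿ⟩. Then the commensurator of the cyclic subgroup ⟨a⟩ in G is all of G, and ⟨a⟩ has infinite index in its commensurator Comm_G(⟨a⟩). -/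
/-- Generators of the Baumslag–Solitar group `BS(1,n)`. -/
inductive BSGen : Type
  | a : BSGen
  | t : BSGen

/-- The single relator `t a t⁻¹ a⁻ⁿ` of `BS(1,n) = ⟨a, t ∣ t a t⁻¹ = aⁿ⟩`. -/
def bsRels (n : ℕ) : Set (FreeGroup BSGen) :=
  {FreeGroup.of BSGen.t * FreeGroup.of BSGen.a * (FreeGroup.of BSGen.t)⁻¹ *
    (FreeGroup.of BSGen.a ^ n)⁻¹}

/-!
Conjugation by `t` carries `⟨a⟩` onto its finite-index subgroup `⟨aⁿ⟩`, so both generators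
commensurate `⟨a⟩`. The exponent sum of `t` maps the group onto `ℤ` and kills `a`, so `⟨a⟩` has
infinite index.
-/

open Subgroup Subgroup.Commensurable
open scoped Pointwise

section Group

variable {G : Type*} [Group G]

theorem toConjAct_smul_zpowers (g x : G) :
    ConjAct.toConjAct g • zpowers x = zpowers (g * x * g⁻¹) :=
  (MulDistribMulAction.toMonoidHom G (ConjAct.toConjAct g)).map_zpowers x

open scoped IsMulCommutative in
theorem commensurable_zpowers_zpow (x : G) {k : ℤ} (hk : k ≠ 0) :
    Commensurable (zpowers (x ^ k)) (zpowers x) := by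
  have powers_le : (powMonoidHom (α := zpowers x) k.natAbs).range ≤
      (zpowers (x ^ k)).subgroupOf (zpowers x) := by
    rintro _ ⟨⟨_, j, rfl⟩, rfl⟩
    obtain ⟨u, hu⟩ : k ∣ k.natAbs := Int.dvd_natAbs_self
    refine mem_subgroupOf.2 ⟨u * j, ?_⟩
    change (x ^ k) ^ (u * j) = (x ^ j) ^ k.natAbs
    rw [← zpow_natCast, ← zpow_mul, ← zpow_mul, hu, ← mul_assoc, mul_comm j]
  have : Group.FG (zpowers x) :=
    (Group.fg_iff_subgroup_fg _).2 ⟨{x}, by rw [Finset.coe_singleton, zpowers_eq_closure]⟩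
  have : (powMonoidHom (α := zpowers x) k.natAbs).range.FiniteIndex :=
    finiteIndex_range_powMonoidHom_of_fg _ (Int.natAbs_ne_zero.2 hk)
  have relIndex_zpow_eq_one : (zpowers x).relIndex (zpowers (x ^ k)) = 1 :=
    relIndex_eq_one.2 (zpowers_le.2 (zpow_mem_zpowers x k))
  exact ⟨(finiteIndex_of_le powers_le).index_ne_zero, relIndex_zpow_eq_one ▸ one_ne_zero⟩

theorem mem_commensurator_zpowers_of_conj_zpow_eq {g x : G} {k l : ℤ} (hk : k ≠ 0) (hl : l ≠ 0)
    (h : g * x ^ k * g⁻¹ = x ^ l) : g ∈ commensurator (zpowers x) := by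
  have conj_commensurable : Commensurable (zpowers (x ^ l)) (ConjAct.toConjAct g • zpowers x) := by
    rw [← h, ← toConjAct_smul_zpowers]
    exact (commensurable_zpowers_zpow x hk).conj _
  exact conj_commensurable.symm.trans (commensurable_zpowers_zpow x hl)

theorem index_eq_zero_of_le_ker {G' : Type*} [Group G'] [Infinite G'] {f : G →* G'}
    (hf : Function.Surjective f) {H : Subgroup G} (hH : H ≤ f.ker) : H.index = 0 := by
  have index_ker_eq_zero : f.ker.index = 0 := by
    rw [index_ker, f.range_eq_top.2 hf, card_top, Nat.card_eq_zero_of_infinite]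
  exact zero_dvd_iff.1 (index_ker_eq_zero ▸ index_dvd_of_le hH)

end Group

section BaumslagSolitar

theorem bs_conj_t_a (n : ℕ) :
    PresentedGroup.of (rels := bsRels n) BSGen.t * PresentedGroup.of BSGen.a *
      (PresentedGroup.of BSGen.t)⁻¹ = PresentedGroup.of BSGen.a ^ n :=
  PresentedGroup.mk_eq_mk_of_mul_inv_mem (Set.mem_singleton _)

theorem bs_commensurator_zpowers_a_eq_top {n : ℕ} (hn : n ≠ 0) :
    commensurator (zpowers (PresentedGroup.of (rels := bsRels n) BSGen.a)) = ⊤ := by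
  refine eq_top_iff.2 fun g _ ↦ PresentedGroup.generated_by _ _ ?_ g
  rintro (_ | _)
  case a => exact mem_commensurator_zpowers_of_conj_zpow_eq one_ne_zero one_ne_zero (by group)
  case t =>
    refine mem_commensurator_zpowers_of_conj_zpow_eq one_ne_zero (Int.natCast_ne_zero.2 hn) ?_
    rw [zpow_one, zpow_natCast, bs_conj_t_a]

variable (n : ℕ)

/-- The homomorphism `BS(1,n) → ℤ` sending a word to its exponent sum in `t`; the target is
written multiplicatively. -/
def bsExponentSum : PresentedGroup (bsRels n) →* Multiplicative ℤ :=
  PresentedGroup.toGroup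
    (f := fun | .a => 1 | .t => Multiplicative.ofAdd 1) (by rintro _ rfl; simp)

theorem bsExponentSum_a : bsExponentSum n (PresentedGroup.of BSGen.a) = 1 :=
  PresentedGroup.toGroup.of _

theorem bsExponentSum_t : bsExponentSum n (PresentedGroup.of BSGen.t) = Multiplicative.ofAdd 1 :=
  PresentedGroup.toGroup.of _

theorem bsExponentSum_surjective : Function.Surjective (bsExponentSum n) := fun z ↦
  ⟨PresentedGroup.of BSGen.t ^ z.toAdd, by
    rw [map_zpow, bsExponentSum_t, ← ofAdd_zsmul, zsmul_one, Int.cast_id, ofAdd_toAdd]⟩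

theorem bs_index_zpowers_a_eq_zero :
    (zpowers (PresentedGroup.of (rels := bsRels n) BSGen.a)).index = 0 :=
  index_eq_zero_of_le_ker (bsExponentSum_surjective n) (zpowers_le.2 (bsExponentSum_a n))

end BaumslagSolitar

/-- For `n ≥ 2` and `G = BS(1,n) = ⟨a, t ∣ t a t⁻¹ = aⁿ⟩`, the
commensurator of the cyclic subgroup `⟨a⟩` in `G` is all of `G`, and `⟨a⟩` has
infinite index in its commensurator (infinite index being `Subgroup.index = 0`). -/
theorem statement6 (n : ℕ) (hn : 2 ≤ n) :
    Subgroup.Commensurable.commensurator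
        (Subgroup.zpowers (PresentedGroup.of (rels := bsRels n) BSGen.a)) = ⊤ ∧
      ((Subgroup.zpowers (PresentedGroup.of (rels := bsRels n) BSGen.a)).subgroupOf
          (Subgroup.Commensurable.commensurator
            (Subgroup.zpowers (PresentedGroup.of (rels := bsRels n) BSGen.a)))).index
        = 0 := by
  have commensurator_eq_top := bs_commensurator_zpowers_a_eq_top (Nat.ne_zero_of_lt hn)
  refine ⟨commensurator_eq_top, ?_⟩
  rw [commensurator_eq_top]
  exact (relIndex_top_right _).trans (bs_index_zpowers_a_eq_zero n)
end
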